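/- arXiv:2305.05863 — 2 statements merged into one kernel-verified Lean document; each statement's English description precedes it below -/
import Mathlib

section
/- Let N and d be positive integers, let w₁,…,w_N be strictly positive real weights with W = diag(w₁,…,w_N), let A ∈ ℝ^{N×d} satisfy AᵀWA = I_d, let f ∈ ℝ^N and α = AᵀWf. Given λ > 0, penalty parameters μ₁,…,μ_d > 0 and filter values h₁,…,h_d ∈ [0,1], let β ∈ ℝ^d be the hybrid coefficient vector β_ℓ = h_ℓ·S_{λμ_ℓ}(α_ℓ). Then ‖W^{1/2}(Aβ)‖₂² ≤ fᵀWf − 2K; equivalently, ∑_{ℓ=1}^d β_ℓ² ≤ ∑_{j=1}^N w_j f_j² − 2K. -/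
/-!
Writing `g = Aβ`, the discrete orthonormality `AᵀWA = I` gives `gᵀWg = ∑ β_ℓ²` (Parseval), and
`α = AᵀWf` gives `fᵀWg = ∑ α_ℓ β_ℓ`. Hence `K = fᵀWg - gᵀWg`, and the claim
`gᵀWg ≤ fᵀWf - 2K` is just `0 ≤ (f - g)ᵀW(f - g)` expanded.
-/

open Finset

/-- The soft thresholding operator `S_k(a) = max(0, a−k) + min(0, a+k)`. -/
def softThreshold (k a : ℝ) : ℝ := max 0 (a - k) + min 0 (a + k)

/-- Parseval's identity for columns orthonormal with respect to the weights `w`. -/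
theorem sum_weight_mul_sq_eq {N d : ℕ} (w : Fin N → ℝ) (A : Fin N → Fin d → ℝ)
    (horth : ∀ i k : Fin d, ∑ j, w j * A j i * A j k = if i = k then 1 else 0)
    (β : Fin d → ℝ) :
    ∑ j, w j * (∑ ℓ, A j ℓ * β ℓ) ^ 2 = ∑ ℓ, β ℓ ^ 2 := by
  calc ∑ j, w j * (∑ ℓ, A j ℓ * β ℓ) ^ 2
      = ∑ j, ∑ i, ∑ k, β i * β k * (w j * A j i * A j k) := by
        refine Finset.sum_congr rfl fun j _ => ?_
        rw [sq, Finset.sum_mul_sum, Finset.mul_sum]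
        refine Finset.sum_congr rfl fun i _ => ?_
        rw [Finset.mul_sum]
        exact Finset.sum_congr rfl fun k _ => by ring
    _ = ∑ i, ∑ k, β i * β k * ∑ j, w j * A j i * A j k := by
        rw [Finset.sum_comm]
        refine Finset.sum_congr rfl fun i _ => ?_
        rw [Finset.sum_comm]
        simp only [Finset.mul_sum]
    _ = ∑ ℓ, β ℓ ^ 2 := by
        simp [horth, sq]

theorem sum_weight_mul_mul_eq {N d : ℕ} (w f : Fin N → ℝ) (A : Fin N → Fin d → ℝ)
    (β : Fin d → ℝ) :
    ∑ j, w j * f j * (∑ ℓ, A j ℓ * β ℓ) = ∑ ℓ, β ℓ * ∑ j, w j * f j * A j ℓ := by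
  simp only [Finset.mul_sum]
  rw [Finset.sum_comm]
  exact Finset.sum_congr rfl fun ℓ _ => Finset.sum_congr rfl fun j _ => by ring

/-- `‖W^{1/2}(Aβ)‖₂² ≤ fᵀWf − 2K` for the hybrid coefficient vector `β`. -/
theorem hybrid_norm_le
    (N d : ℕ) (hN : 0 < N) (hd : 0 < d)
    (w : Fin N → ℝ) (hw : ∀ j, 0 < w j)
    (A : Fin N → Fin d → ℝ)
    (horth : ∀ i k : Fin d, ∑ j, w j * A j i * A j k = if i = k then 1 else 0)
    (f : Fin N → ℝ) (α : Fin d → ℝ)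
    (hα : ∀ ℓ, α ℓ = ∑ j, w j * f j * A j ℓ)
    (lam : ℝ) (hlam : 0 < lam)
    (μ : Fin d → ℝ) (hμ : ∀ ℓ, 0 < μ ℓ)
    (h : Fin d → ℝ) (hh : ∀ ℓ, h ℓ ∈ Set.Icc (0 : ℝ) 1)
    (β : Fin d → ℝ)
    (hβ : ∀ ℓ, β ℓ = h ℓ * softThreshold (lam * μ ℓ) (α ℓ)) :
    ∑ j, w j * (∑ ℓ, A j ℓ * β ℓ) ^ 2
      ≤ (∑ j, w j * f j ^ 2)
        - 2 * ∑ ℓ, (h ℓ * softThreshold (lam * μ ℓ) (α ℓ) * α ℓ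
            - (h ℓ * softThreshold (lam * μ ℓ) (α ℓ)) ^ 2) := by
  have hsq := sum_weight_mul_sq_eq w A horth β
  have hcross := sum_weight_mul_mul_eq w f A β
  simp only [← hα] at hcross
  have hnonneg : 0 ≤ ∑ j, w j * (f j - ∑ ℓ, A j ℓ * β ℓ) ^ 2 :=
    Finset.sum_nonneg fun j _ => mul_nonneg (hw j).le (sq_nonneg _)
  have hexpand : ∑ j, w j * (f j - ∑ ℓ, A j ℓ * β ℓ) ^ 2
      = ∑ j, w j * f j ^ 2 - 2 * ∑ j, w j * f j * (∑ ℓ, A j ℓ * β ℓ)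
        + ∑ j, w j * (∑ ℓ, A j ℓ * β ℓ) ^ 2 := by
    rw [Finset.mul_sum, ← Finset.sum_sub_distrib, ← Finset.sum_add_distrib]
    exact Finset.sum_congr rfl fun j _ => by ring
  simp only [← hβ, Finset.sum_sub_distrib]
  linarith
end

section
/- Under the continuous quadrature setup, let f and f^ε be bounded measurable real-valued functions on Ω (f^ε a noisy version of f). Then the hyperinterpolant of the noisy function satisfies ‖ℒf^ε − f‖₂ ≤ V^{1/2}·‖f^ε − f‖_∞ + 2·V^{1/2}·E(f), where E(f) = inf{ ‖f − p‖_∞ : p ∈ span{Φ₁,…,Φ_d} }. -/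
/-!
Write `ℒg` for the hyperinterpolant and fix `p = ∑ c ℓ • Φ ℓ`. Discrete orthonormality gives `ℒp = p`,
so `ℒfε - f = ℒ(fε - p) + (p - f)`. Continuous orthonormality gives `‖ℒg‖₂² = ∑ α_ℓ(g)²`, and Bessel's
inequality for the discrete inner product bounds this by `∑ w_j g(x_j)² ≤ V ‖g‖_∞²`. With
`‖fε - p‖_∞ ≤ ‖fε - f‖_∞ + ‖f - p‖_∞` and Minkowski's inequality in `L²(ω)` this yields
`‖ℒfε - f‖₂ ≤ √V ‖fε - f‖_∞ + 2 √V ‖f - p‖_∞`; then take the infimum over `c`.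
-/

open Finset MeasureTheory

/-- Bessel's inequality for the discrete inner product `⟨g, h⟩ = ∑ w_j g_j h_j`. -/
lemma discrete_bessel {d N : ℕ} (w : Fin N → ℝ) (hw : ∀ j, 0 < w j) (φ : Fin d → Fin N → ℝ)
    (h : ∀ i k : Fin d, ∑ j, w j * φ i j * φ k j = if i = k then 1 else 0) (g : Fin N → ℝ) :
    ∑ ℓ, (∑ j, w j * g j * φ ℓ j) ^ 2 ≤ ∑ j, w j * g j ^ 2 := by
  set α : Fin d → ℝ := fun ℓ => ∑ j, w j * g j * φ ℓ j with hα
  -- Expand the squared discrete norm of the residual `g - ∑ α_ℓ φ_ℓ`.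
  have h0 : 0 ≤ ∑ j, w j * (g j - ∑ ℓ, α ℓ * φ ℓ j) ^ 2 :=
    Finset.sum_nonneg fun j _ => mul_nonneg (hw j).le (sq_nonneg _)
  have h1 : ∑ j, w j * g j * (∑ ℓ, α ℓ * φ ℓ j) = ∑ ℓ, α ℓ ^ 2 := by
    simp_rw [Finset.mul_sum]
    rw [Finset.sum_comm]
    refine Finset.sum_congr rfl fun ℓ _ => ?_
    rw [sq]
    nth_rewrite 3 [hα]
    simp only [Finset.mul_sum]
    exact Finset.sum_congr rfl fun j _ => by ring
  have h2 : ∑ j, w j * (∑ ℓ, α ℓ * φ ℓ j) ^ 2 = ∑ ℓ, α ℓ ^ 2 := by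
    simp_rw [sq, Finset.sum_mul_sum, Finset.mul_sum]
    rw [Finset.sum_comm]
    refine Finset.sum_congr rfl fun i _ => ?_
    rw [Finset.sum_comm]
    have : ∀ k, ∑ j, w j * (α i * φ i j * (α k * φ k j)) = α i * α k * if i = k then 1 else 0 := by
      intro k
      rw [← h i k, Finset.mul_sum]
      exact Finset.sum_congr rfl fun j _ => by ring
    simp [this]
  have h3 : ∑ j, w j * (g j - ∑ ℓ, α ℓ * φ ℓ j) ^ 2 = ∑ j, w j * g j ^ 2
      - 2 * ∑ j, w j * g j * (∑ ℓ, α ℓ * φ ℓ j) + ∑ j, w j * (∑ ℓ, α ℓ * φ ℓ j) ^ 2 := by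
    rw [Finset.mul_sum, ← Finset.sum_sub_distrib, ← Finset.sum_add_distrib]
    exact Finset.sum_congr rfl fun j _ => by ring
  rw [h1, h2] at h3
  linarith

/-- Parseval's identity for a finite orthonormal system in `L²(ω)`. -/
lemma integral_sq_sum {Ω : Type*} [MeasurableSpace Ω] (ω : Measure Ω) {d : ℕ}
    (Φ : Fin d → Ω → ℝ) (hint : ∀ i k, Integrable (fun x => Φ i x * Φ k x) ω)
    (h : ∀ i k : Fin d, ∫ x, Φ i x * Φ k x ∂ω = if i = k then 1 else 0) (a : Fin d → ℝ) :
    ∫ y, (∑ ℓ, a ℓ * Φ ℓ y) ^ 2 ∂ω = ∑ ℓ, a ℓ ^ 2 := by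
  have e : ∀ y, (∑ ℓ, a ℓ * Φ ℓ y) ^ 2 = ∑ i, ∑ k, a i * a k * (Φ i y * Φ k y) := by
    intro y
    rw [sq, Finset.sum_mul_sum]
    exact Finset.sum_congr rfl fun i _ => Finset.sum_congr rfl fun k _ => by ring
  simp_rw [e]
  rw [integral_finsetSum _ fun i _ => integrable_finsetSum _ fun k _ => (hint i k).const_mul _]
  refine Finset.sum_congr rfl fun i _ => ?_
  rw [integral_finsetSum _ fun k _ => (hint i k).const_mul _]
  simp [integral_const_mul, h, sq]

/-- Minkowski's inequality in `L²` when one summand is bounded: if `‖a‖₂ ≤ √V K` and `|b| ≤ M ≤ K`,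
then `‖a + b‖₂² ≤ V (K + M)²`. -/
lemma integral_sq_add_le {Ω : Type*} [MeasurableSpace Ω] (ω : Measure Ω) [IsFiniteMeasure ω]
    (V : ℝ) (hV : V = (ω Set.univ).toReal) (a b : Ω → ℝ) (K M : ℝ) (hM : 0 ≤ M) (hMK : M ≤ K)
    (ha : Integrable (fun y => a y ^ 2) ω) (hb : ∀ y, |b y| ≤ M)
    (hab : Integrable (fun y => (a y + b y) ^ 2) ω)
    (haK : ∫ y, a y ^ 2 ∂ω ≤ V * K ^ 2) :
    ∫ y, (a y + b y) ^ 2 ∂ω ≤ V * (K + M) ^ 2 := by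
  rcases (hM.trans hMK).eq_or_lt with hK | hK
  · obtain rfl : M = 0 := by linarith
    have hb0 : ∀ y, b y = 0 := fun y => abs_nonpos_iff.mp (hb y)
    simpa [hb0] using haK
  · -- Young's inequality `2 |a| K ≤ a ^ 2 + K ^ 2` controls the cross term.
    have hpt : ∀ y, K * (a y + b y) ^ 2 ≤ (K + M) * a y ^ 2 + (M * K ^ 2 + K * M ^ 2) := by
      intro y
      have h1 : (a y + b y) ^ 2 ≤ (|a y| + M) ^ 2 := by
        rw [← sq_abs]
        gcongr
        exact (abs_add_le _ _).trans (by gcongr; exact hb y)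
      have h2 := mul_le_mul_of_nonneg_left h1 hK.le
      have h3 := mul_nonneg hM (sq_nonneg (|a y| - K))
      have h4 := sq_abs (a y)
      rw [← h4]
      nlinarith
    have hI := integral_mono (hab.const_mul K)
      ((ha.const_mul (K + M)).add (integrable_const (M * K ^ 2 + K * M ^ 2))) hpt
    have hE : ∫ y, ((K + M) * a y ^ 2 + (M * K ^ 2 + K * M ^ 2)) ∂ω
        = (K + M) * ∫ y, a y ^ 2 ∂ω + V * (M * K ^ 2 + K * M ^ 2) := by
      rw [integral_add (ha.const_mul _) (integrable_const _), integral_const_mul, integral_const, hV]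
      simp [Measure.real]
    have hI' : K * ∫ y, (a y + b y) ^ 2 ∂ω
        ≤ (K + M) * ∫ y, a y ^ 2 ∂ω + V * (M * K ^ 2 + K * M ^ 2) := by
      rw [← hE, ← integral_const_mul]
      exact hI
    have h5 := mul_le_mul_of_nonneg_left haK (add_nonneg hK.le hM)
    refine le_of_mul_le_mul_left ?_ hK
    nlinarith

/-- error of hyperinterpolation of a noisy function:
`‖ℒf^ε − f‖₂ ≤ V^{1/2}·‖f^ε − f‖_∞ + 2·V^{1/2}·E(f)`. -/
theorem hyperinterpolation_noisy_error
    {Ω : Type*} [MeasurableSpace Ω] [Nonempty Ω]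
    (ω : Measure Ω) [IsFiniteMeasure ω]
    (V : ℝ) (hV : V = (ω Set.univ).toReal)
    (d N : ℕ) (hd : 0 < d) (hN : 0 < N)
    (Φ : Fin d → Ω → ℝ)
    (hΦmeas : ∀ ℓ, Measurable (Φ ℓ))
    (hΦbdd : ∀ ℓ, ∃ C : ℝ, ∀ x, |Φ ℓ x| ≤ C)
    (horth : ∀ i k : Fin d, ∫ x, Φ i x * Φ k x ∂ω = if i = k then 1 else 0)
    (x : Fin N → Ω) (w : Fin N → ℝ) (hw : ∀ j, 0 < w j)
    (hwV : ∑ j, w j = V)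
    (hdorth : ∀ i k : Fin d,
      ∑ j, w j * Φ i (x j) * Φ k (x j) = if i = k then 1 else 0)
    (f fε : Ω → ℝ)
    (hf : Measurable f) (hfb : ∃ C : ℝ, ∀ y, |f y| ≤ C)
    (hfε : Measurable fε) (hfεb : ∃ C : ℝ, ∀ y, |fε y| ≤ C) :
    Real.sqrt (∫ y,
        ((∑ ℓ, (∑ j, w j * fε (x j) * Φ ℓ (x j)) * Φ ℓ y) - f y) ^ 2 ∂ω)
      ≤ Real.sqrt V * (⨆ y, |fε y - f y|)
        + 2 * Real.sqrt V *
          sInf {r : ℝ | ∃ c : Fin d → ℝ, r = ⨆ y, |f y - ∑ ℓ, c ℓ * Φ ℓ y|} := by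
  have hV0 : 0 ≤ V := hV ▸ ENNReal.toReal_nonneg
  have hVpos : 0 < V := hwV ▸ Finset.sum_pos (fun j _ => hw j) ⟨⟨0, hN⟩, Finset.mem_univ _⟩
  obtain ⟨Cf, hCf⟩ := hfb
  obtain ⟨Cε, hCε⟩ := hfεb
  choose CΦ hCΦ using hΦbdd
  have hsqrt : 0 < Real.sqrt V := Real.sqrt_pos.mpr hVpos
  have hpm : ∀ c : Fin d → ℝ, Measurable fun y => ∑ ℓ, c ℓ * Φ ℓ y := fun c =>
    Finset.measurable_sum _ fun ℓ _ => (hΦmeas ℓ).const_mul _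
  have hpb : ∀ c : Fin d → ℝ, ∀ y, |∑ ℓ, c ℓ * Φ ℓ y| ≤ ∑ ℓ, |c ℓ| * CΦ ℓ := fun c y =>
    (Finset.abs_sum_le_sum_abs _ _).trans <| Finset.sum_le_sum fun ℓ _ => by
      rw [abs_mul]
      exact mul_le_mul_of_nonneg_left (hCΦ ℓ y) (abs_nonneg _)
  have hbint : ∀ (g : Ω → ℝ) (C : ℝ), Measurable g → (∀ y, |g y| ≤ C) → Integrable g ω :=
    fun g C hg hC => Integrable.of_bound hg.aestronglyMeasurable C (.of_forall hC)
  have hsqint : ∀ (g : Ω → ℝ) (C : ℝ), Measurable g → (∀ y, |g y| ≤ C) →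
      Integrable (fun y => g y ^ 2) ω := fun g C hg hC =>
    hbint _ (C ^ 2) (hg.pow_const 2) fun y => by
      rw [abs_pow]
      exact pow_le_pow_left₀ (abs_nonneg _) (hC y) 2
  have hΦint : ∀ i k, Integrable (fun y => Φ i y * Φ k y) ω := fun i k =>
    hbint _ (CΦ i * CΦ k) ((hΦmeas i).mul (hΦmeas k)) fun y => by
      rw [abs_mul]
      exact mul_le_mul (hCΦ i y) (hCΦ k y) (abs_nonneg _) ((abs_nonneg _).trans (hCΦ i y))
  have hDle : ∀ y, |fε y - f y| ≤ ⨆ y, |fε y - f y| := le_ciSup (f := fun y => |fε y - f y|)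
    ⟨Cε + Cf, by
      rintro _ ⟨y, rfl⟩
      exact (abs_sub _ _).trans (add_le_add (hCε y) (hCf y))⟩
  set D := ⨆ y, |fε y - f y| with hD
  have hD0 : 0 ≤ D := Real.iSup_nonneg fun y => abs_nonneg _
  set α : Fin d → ℝ := fun ℓ => ∑ j, w j * fε (x j) * Φ ℓ (x j) with hα
  have key : ∀ c : Fin d → ℝ,
      Real.sqrt (∫ y, ((∑ ℓ, α ℓ * Φ ℓ y) - f y) ^ 2 ∂ω)
        ≤ Real.sqrt V * D + 2 * Real.sqrt V * ⨆ y, |f y - ∑ ℓ, c ℓ * Φ ℓ y| := by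
    intro c
    have hMle : ∀ y, |f y - ∑ ℓ, c ℓ * Φ ℓ y| ≤ ⨆ y, |f y - ∑ ℓ, c ℓ * Φ ℓ y| :=
      le_ciSup (f := fun y => |f y - ∑ ℓ, c ℓ * Φ ℓ y|)
        ⟨Cf + ∑ ℓ, |c ℓ| * CΦ ℓ, by
          rintro _ ⟨y, rfl⟩
          exact (abs_sub _ _).trans (add_le_add (hCf y) (hpb c y))⟩
    set M := ⨆ y, |f y - ∑ ℓ, c ℓ * Φ ℓ y| with hM
    have hM0 : 0 ≤ M := Real.iSup_nonneg fun y => abs_nonneg _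
    set g : Ω → ℝ := fun y => fε y - ∑ ℓ, c ℓ * Φ ℓ y with hg
    have hgle : ∀ y, |g y| ≤ D + M := fun y => by
      have : g y = (fε y - f y) + (f y - ∑ ℓ, c ℓ * Φ ℓ y) := by simp [hg]
      rw [this]
      exact (abs_add_le _ _).trans (add_le_add (hDle y) (hMle y))
    -- The coefficients of `ℒ(fε - p)` are `α - c`, because `ℒp = p`.
    have hcoef : ∀ ℓ, ∑ j, w j * g (x j) * Φ ℓ (x j) = α ℓ - c ℓ := by
      intro ℓ
      have h1 : ∑ j, w j * (∑ k, c k * Φ k (x j)) * Φ ℓ (x j) = c ℓ := by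
        simp_rw [Finset.mul_sum, Finset.sum_mul]
        rw [Finset.sum_comm]
        have : ∀ k, ∑ j, w j * (c k * Φ k (x j)) * Φ ℓ (x j) = c k * if k = ℓ then 1 else 0 := by
          intro k
          rw [← hdorth k ℓ, Finset.mul_sum]
          exact Finset.sum_congr rfl fun j _ => by ring
        simp [this]
      conv_rhs => rw [← h1]
      rw [hα, ← Finset.sum_sub_distrib]
      exact Finset.sum_congr rfl fun j _ => by simp only [hg]; ring
    have hstab : ∫ y, (∑ ℓ, (α ℓ - c ℓ) * Φ ℓ y) ^ 2 ∂ω ≤ V * (D + M) ^ 2 := by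
      rw [integral_sq_sum ω Φ hΦint horth]
      have hB := discrete_bessel w hw (fun ℓ j => Φ ℓ (x j)) hdorth (fun j => g (x j))
      simp only [hcoef] at hB
      refine hB.trans ?_
      rw [← hwV, Finset.sum_mul]
      refine Finset.sum_le_sum fun j _ => mul_le_mul_of_nonneg_left ?_ (hw j).le
      rw [← sq_abs]
      exact pow_le_pow_left₀ (abs_nonneg _) (hgle _) 2
    have hsplit : ∀ y, (∑ ℓ, α ℓ * Φ ℓ y) - f y
        = (∑ ℓ, (α ℓ - c ℓ) * Φ ℓ y) + ((∑ ℓ, c ℓ * Φ ℓ y) - f y) := fun y => by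
      simp only [sub_mul, Finset.sum_sub_distrib]
      ring
    have hmain : ∫ y, ((∑ ℓ, α ℓ * Φ ℓ y) - f y) ^ 2 ∂ω ≤ V * ((D + M) + M) ^ 2 := by
      have hI : Integrable (fun y => ((∑ ℓ, α ℓ * Φ ℓ y) - f y) ^ 2) ω :=
        hsqint _ (∑ ℓ, |α ℓ| * CΦ ℓ + Cf) ((hpm α).sub hf) fun y =>
          (abs_sub _ _).trans (add_le_add (hpb α y) (hCf y))
      simp only [hsplit] at hI ⊢
      exact integral_sq_add_le ω V hV _ _ (D + M) M hM0 (by linarith)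
        (hsqint _ _ (hpm _) (hpb _)) (fun y => by rw [abs_sub_comm]; exact hMle y) hI hstab
    calc _ ≤ Real.sqrt (V * ((D + M) + M) ^ 2) := Real.sqrt_le_sqrt hmain
      _ = Real.sqrt V * ((D + M) + M) := by
        rw [Real.sqrt_mul hV0, Real.sqrt_sq (by positivity)]
      _ = _ := by ring
  have hinf : (Real.sqrt (∫ y, ((∑ ℓ, α ℓ * Φ ℓ y) - f y) ^ 2 ∂ω) - Real.sqrt V * D)
      / (2 * Real.sqrt V)
      ≤ sInf {r : ℝ | ∃ c : Fin d → ℝ, r = ⨆ y, |f y - ∑ ℓ, c ℓ * Φ ℓ y|} := by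
    refine le_csInf ⟨_, 0, rfl⟩ ?_
    rintro _ ⟨c, rfl⟩
    rw [div_le_iff₀ (by positivity)]
    linarith [key c]
  rw [div_le_iff₀ (by positivity)] at hinf
  linarith
end
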